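/- Let p₀ = (1 − log π / log 4)^{-1} and let p > p₀ be a real number. Then there exists a positive integer d such that 2^{1/p} · ∫_{𝕋^d} |z₁ + z₂ + ⋯ + z_d|/√d dm(z) < 1, where m is the normalized Haar measure on 𝕋^d. (This is the quantitative core of the main theorem: for the symbol φ = f = (z₁ + ⋯ + z_d)/√d one has ⟨f, φ⟩ = 1, ‖H_φ‖_{S_p} = 2^{1/p}, and ‖f‖₁ = ∫ |z₁ + ⋯ + z_d|/√d dm, so this inequality says |⟨f, φ⟩| > ‖H_φ‖_{S_p} ‖f‖₁.) -/

import Mathlib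

open MeasureTheory

noncomputable instance : MeasurableSpace Circle := borel Circle
instance : BorelSpace Circle := ⟨rfl⟩

/-- The normalized Lebesgue (arc-length) measure on the unit circle `{z : ℂ | |z| = 1}`,
a probability measure; it is the normalized Haar measure of the circle group. -/
noncomputable def circleHaar : Measure Circle :=
  (ENNReal.ofReal (2 * Real.pi))⁻¹ •
    (volume.restrict (Set.Ioc 0 (2 * Real.pi))).map Circle.exp

/-- The normalized Haar measure on the `d`-dimensional torus `𝕋^d`, i.e. the product of the
normalized Lebesgue (arc-length) measures on each circle factor. -/
noncomputable def torusHaar (d : ℕ) : Measure (Fin d → Circle) :=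
  Measure.pi fun _ => circleHaar

/-!
Multiplying `S_d = z₁ + ⋯ + z_d` by a uniformly distributed `u` in the circle does not change its
law, while for fixed `s` the mean of `|Re (u s)|` is `(2 / π) |s|`; hence
`𝔼 |S_d| = (π / 2) 𝔼 |Re S_d|`. The real part is a sum of independent centred variables of variance
`1 / 2`, so by the central limit theorem `Re S_d / √d` converges in law to a Gaussian of variance
`1 / 2`. Second moments stay bounded, so first absolute moments converge too, and
`𝔼 |S_d| / √d → (π / 2) / √π = √π / 2`. Finally `2 ^ (1 / p) * (√π / 2) < 1` is the condition
`p > p₀` after taking logarithms.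
-/

open Filter ProbabilityTheory Set
open scoped NNReal Real Topology

section FirstMoments

variable {Ω Ω' ι E : Type*} {mΩ : MeasurableSpace Ω} {mΩ' : MeasurableSpace Ω'}
  [NormedAddCommGroup E] {μ : Measure Ω}

lemma sub_min_le_sq_div {x M : ℝ} (hM : 0 < M) : x - min x M ≤ x ^ 2 / M := by
  rcases le_total x M with h | h
  · rw [min_eq_left h, sub_self]
    positivity
  · rw [min_eq_right h, le_div_iff₀ hM]
    nlinarith

lemma integrable_min_norm_const [IsFiniteMeasure μ] {f : Ω → E} (hf : Integrable f μ) (M : ℝ) :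
    Integrable (fun ω ↦ min ‖f ω‖ M) μ :=
  hf.norm.inf (integrable_const M)

lemma dist_integral_norm_integral_min_norm_le [IsFiniteMeasure μ] {f : Ω → E} (hf : MemLp f 2 μ)
    {M : ℝ} (hM : 0 < M) :
    dist (∫ ω, ‖f ω‖ ∂μ) (∫ ω, min ‖f ω‖ M ∂μ) ≤ (∫ ω, ‖f ω‖ ^ 2 ∂μ) / M := by
  have hint : Integrable f μ := hf.integrable one_le_two
  have hmin := integrable_min_norm_const hint M
  rw [Real.dist_eq, ← integral_sub hint.norm hmin, abs_of_nonneg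
    (integral_nonneg fun ω ↦ sub_nonneg.2 (min_le_left _ _)), ← integral_div]
  exact integral_mono (hint.norm.sub hmin) (hf.norm.integrable_sq.div_const M)
    fun ω ↦ sub_min_le_sq_div hM

lemma tendsto_integral_min_norm_atTop {f : Ω → E} (hf : Integrable f μ) :
    Tendsto (fun M : ℝ ↦ ∫ ω, min ‖f ω‖ M ∂μ) atTop (𝓝 (∫ ω, ‖f ω‖ ∂μ)) := by
  refine tendsto_integral_filter_of_dominated_convergence (fun ω ↦ ‖f ω‖)
    (.of_forall fun M ↦ hf.norm.aestronglyMeasurable.inf aestronglyMeasurable_const) ?_ hf.norm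
    (ae_of_all _ fun ω ↦ tendsto_const_nhds.congr' ?_)
  · filter_upwards [eventually_ge_atTop 0] with M hM
    refine ae_of_all _ fun ω ↦ ?_
    rw [Real.norm_of_nonneg (le_min (norm_nonneg _) hM)]
    exact min_le_left _ _
  · filter_upwards [eventually_ge_atTop ‖f ω‖] with M hM
    exact (min_eq_left hM).symm

variable [MeasurableSpace E] [OpensMeasurableSpace E] {P' : Measure Ω'} [IsProbabilityMeasure P']
  {Ωs : ι → Type*} {mΩs : ∀ i, MeasurableSpace (Ωs i)} {P : ∀ i, Measure (Ωs i)}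
  [∀ i, IsProbabilityMeasure (P i)] {X : ∀ i, Ωs i → E} {Y : Ω' → E} {l : Filter ι}

lemma tendsto_integral_min_norm_of_tendstoInDistribution
    (h : TendstoInDistribution X l Y P P') {M : ℝ} (hM : 0 ≤ M) :
    Tendsto (fun i ↦ ∫ ω, min ‖X i ω‖ M ∂P i) l (𝓝 (∫ ω, min ‖Y ω‖ M ∂P')) := by
  let φ : BoundedContinuousFunction E ℝ :=
    .ofNormedAddCommGroup (fun x ↦ min ‖x‖ M) (by fun_prop) M fun x ↦ by
      rw [Real.norm_of_nonneg (le_min (norm_nonneg _) hM)]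
      exact min_le_right _ _
  have hφ := ProbabilityMeasure.tendsto_iff_forall_integral_tendsto.1 h.tendsto φ
  simp only [ProbabilityMeasure.coe_mk] at hφ
  rw [integral_map h.aemeasurable_limit φ.continuous.aestronglyMeasurable] at hφ
  refine hφ.congr fun i ↦ ?_
  rw [integral_map (h.forall_aemeasurable i) φ.continuous.aestronglyMeasurable]
  rfl

/-- Bounded second moments make the truncation error uniformly small, so the limits in `i` and in
the truncation level can be interchanged. -/
theorem tendsto_integral_norm_of_tendstoInDistribution (h : TendstoInDistribution X l Y P P')
    (hX : ∀ i, MemLp (X i) 2 (P i)) (hY : Integrable Y P') {C : ℝ}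
    (hC : ∀ i, ∫ ω, ‖X i ω‖ ^ 2 ∂P i ≤ C) :
    Tendsto (fun i ↦ ∫ ω, ‖X i ω‖ ∂P i) l (𝓝 (∫ ω, ‖Y ω‖ ∂P')) := by
  have hunif : TendstoUniformly (fun (M : ℝ) i ↦ ∫ ω, min ‖X i ω‖ M ∂P i)
      (fun i ↦ ∫ ω, ‖X i ω‖ ∂P i) atTop := by
    rw [Metric.tendstoUniformly_iff]
    intro ε hε
    have hsmall : ∀ᶠ M : ℝ in atTop, C / M < ε :=
      (tendsto_const_nhds.div_atTop tendsto_id).eventually_lt_const hε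
    filter_upwards [hsmall, eventually_gt_atTop 0] with M hMε hM i
    calc _ ≤ (∫ ω, ‖X i ω‖ ^ 2 ∂P i) / M := dist_integral_norm_integral_min_norm_le (hX i) hM
      _ ≤ C / M := by gcongr; exact hC i
      _ < ε := hMε
  refine hunif.tendsto_of_eventually_tendsto ?_ (tendsto_integral_min_norm_atTop hY)
  filter_upwards [eventually_ge_atTop 0] with M hM
  exact tendsto_integral_min_norm_of_tendstoInDistribution h hM

end FirstMoments

section CentralLimit

lemma integral_Ioi_mul_exp_neg_mul_sq {b : ℝ} (hb : 0 < b) :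
    ∫ x in Ioi (0 : ℝ), x * Real.exp (-b * x ^ 2) = (2 * b)⁻¹ := by
  have h := integral_rpow_mul_exp_neg_mul_rpow (p := 2) (q := 1) two_pos (by norm_num) hb
  rw [show -(1 + 1) / 2 = (-1 : ℝ) by norm_num, show (1 + 1) / 2 = (1 : ℝ) by norm_num,
    Real.rpow_neg_one, Real.Gamma_one, mul_one, mul_one_div, ← inv_mul_eq_div, ← mul_inv] at h
  simpa only [Real.rpow_one, Real.rpow_two] using h

lemma integral_abs_gaussianReal (v : ℝ≥0) :
    ∫ x, |x| ∂gaussianReal 0 v = √(2 * v / π) := by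
  rcases eq_or_ne v 0 with rfl | hv
  · simp
  let g : ℝ → ℝ := fun x ↦ x * Real.exp (-(2 * v : ℝ)⁻¹ * x ^ 2)
  calc ∫ x, |x| ∂gaussianReal 0 v = ∫ x, (√(2 * π * v))⁻¹ * g |x| := by
        rw [integral_gaussianReal_eq_integral_smul hv]
        refine integral_congr_ae (ae_of_all _ fun x ↦ ?_)
        simp only [gaussianPDFReal, g, smul_eq_mul, sq_abs, sub_zero]
        ring_nf
    _ = (√(2 * π * v))⁻¹ * (2 * v) := by
        rw [integral_const_mul, integral_comp_abs,
          integral_Ioi_mul_exp_neg_mul_sq (by positivity)]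
        field_simp
    _ = √(2 * v / π) := by
        symm
        rw [Real.sqrt_eq_iff_mul_self_eq (by positivity) (by positivity), ← sq, mul_pow, inv_pow,
          Real.sq_sqrt (by positivity)]
        field_simp

lemma variance_sum_of_identDistrib {Ω ι : Type*} {mΩ : MeasurableSpace Ω} {P : Measure Ω}
    {X : ι → Ω → ℝ} {i₀ : ι} (hX : MemLp (X i₀) 2 P)
    (hindep : Pairwise fun i j ↦ X i ⟂ᵢ[P] X j)
    (hident : ∀ i, IdentDistrib (X i) (X i₀) P P) (s : Finset ι) :
    Var[fun ω ↦ ∑ i ∈ s, X i ω; P] = s.card * Var[X i₀; P] := by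
  have hvar := IndepFun.variance_sum (s := s) (fun i _ ↦ (hident i).memLp_iff.2 hX)
    fun _ _ _ _ hij ↦ hindep hij
  simpa [Finset.sum_fn, fun i ↦ (hident i).variance_eq] using hvar

variable {Ω : Type*} {mΩ : MeasurableSpace Ω} {P : Measure Ω} [IsProbabilityMeasure P]
  {X : ℕ → Ω → ℝ}

lemma integral_sq_inv_sqrt_mul_sum_sub_le (hX : MemLp (X 0) 2 P)
    (hindep : Pairwise fun i j ↦ X i ⟂ᵢ[P] X j) (hident : ∀ i, IdentDistrib (X i) (X 0) P P)
    (n : ℕ) :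
    ∫ ω, ((√n)⁻¹ * (∑ k ∈ Finset.range n, X k ω - n * P[X 0])) ^ 2 ∂P ≤ Var[X 0; P] := by
  have hL (i : ℕ) : MemLp (X i) 2 P := (hident i).memLp_iff.2 hX
  have hmean : ∫ ω, ∑ k ∈ Finset.range n, X k ω ∂P = n * P[X 0] := by
    rw [integral_finsetSum _ fun k _ ↦ (hL k).integrable one_le_two]
    simp [fun i ↦ (hident i).integral_eq]
  have hvar := variance_eq_integral (μ := P) (X := fun ω ↦ ∑ k ∈ Finset.range n, X k ω)
    (memLp_finsetSum _ fun k _ ↦ hL k).aemeasurable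
  rw [hmean, variance_sum_of_identDistrib hX hindep hident, Finset.card_range] at hvar
  simp only [mul_pow, integral_const_mul, ← hvar, inv_pow, Real.sq_sqrt n.cast_nonneg]
  rw [← mul_assoc]
  exact mul_le_of_le_one_left (variance_nonneg _ _) inv_mul_le_one

theorem tendsto_integral_abs_inv_sqrt_mul_sum_sub (hX : MemLp (X 0) 2 P) (hindep : iIndepFun X P)
    (hident : ∀ i, IdentDistrib (X i) (X 0) P P) :
    Tendsto (fun n : ℕ ↦ ∫ ω, |(√n)⁻¹ * (∑ k ∈ Finset.range n, X k ω - n * P[X 0])| ∂P) atTop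
      (𝓝 √(2 * Var[X 0; P] / π)) := by
  have hclt := tendstoInDistribution_inv_sqrt_mul_sum_sub .id hX hindep hident
  have hlim := tendsto_integral_norm_of_tendstoInDistribution hclt
    (fun n ↦ ((memLp_finsetSum _ fun k _ ↦ (hident k).memLp_iff.2 hX).sub
      (memLp_const _)).const_mul _)
    (memLp_one_iff_integrable.1 (memLp_id_gaussianReal 1))
    (fun n ↦ by
      simpa only [Real.norm_eq_abs, sq_abs] using
        integral_sq_inv_sqrt_mul_sum_sub_le hX (fun _ _ ↦ hindep.indepFun) hident n)
  simpa [integral_abs_gaussianReal, Real.coe_toNNReal _ (variance_nonneg _ _)] using hlim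

theorem tendsto_integral_pi_abs_inv_sqrt_mul_sum_sub {α : Type*} {mα : MeasurableSpace α}
    {μ : Measure α} [IsProbabilityMeasure μ] {g : α → ℝ} (hg : MemLp g 2 μ) :
    Tendsto (fun n : ℕ ↦ ∫ z : Fin n → α, |(√n)⁻¹ * (∑ j, g (z j) - n * μ[g])|
      ∂Measure.pi fun _ ↦ μ) atTop (𝓝 √(2 * Var[g; μ] / π)) := by
  obtain ⟨Ω, mΩ, P, U, -, hlaw, hindep, hP⟩ := exists_iid ℕ μ
  have hgU (k : ℕ) : AEMeasurable g (P.map (U k)) := by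
    rw [(hlaw k).map_eq]
    exact hg.aemeasurable
  have hident (k : ℕ) : IdentDistrib (g ∘ U k) g P μ :=
    ((hlaw k).identDistrib .id).comp_of_aemeasurable (hgU k)
  have hlim := tendsto_integral_abs_inv_sqrt_mul_sum_sub ((hident 0).memLp_iff.2 hg)
    (hindep.comp₀ (fun _ ↦ g) (fun k ↦ (hlaw k).aemeasurable) hgU)
    fun k ↦ (hident k).trans (hident 0).symm
  rw [(hident 0).integral_eq, (hident 0).variance_eq] at hlim
  refine hlim.congr fun n ↦ ?_
  have hpi : HasLaw (fun ω (j : Fin n) ↦ U j ω) (Measure.pi fun _ ↦ μ) P :=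
    iIndepFun.hasLaw_pi (fun j ↦ hlaw j) (hindep.precomp Fin.val_injective)
  have hsum : AEStronglyMeasurable (fun z : Fin n → α ↦ ∑ j, g (z j)) (Measure.pi fun _ ↦ μ) :=
    (memLp_finsetSum _ fun j _ ↦
      hg.comp_measurePreserving (measurePreserving_eval _ j)).aestronglyMeasurable
  have htransfer := hpi.integral_comp
    (f := fun z : Fin n → α ↦ |(√n)⁻¹ * (∑ j, g (z j) - n * μ[g])|)
    ((hsum.sub aestronglyMeasurable_const).const_mul _).norm
  simp only [← htransfer, Finset.sum_range, Function.comp_apply]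

end CentralLimit

section Rotation

local instance : Fact (0 < 2 * π) := ⟨Real.two_pi_pos⟩

lemma integral_circleHaar {E : Type*} [NormedAddCommGroup E] [NormedSpace ℝ E] {f : Circle → E}
    (hf : StronglyMeasurable f) :
    ∫ w, f w ∂circleHaar = (2 * π)⁻¹ • ∫ t in (0 : ℝ)..2 * π, f (Circle.exp t) := by
  rw [circleHaar, integral_smul_measure, integral_map (by fun_prop) hf.aestronglyMeasurable,
    intervalIntegral.integral_of_le (by positivity), ENNReal.toReal_inv,
    ENNReal.toReal_ofReal (by positivity)]

lemma circleHaar_eq_map_haarAddCircle :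
    circleHaar = (AddCircle.haarAddCircle (T := 2 * π)).map AddCircle.toCircle := by
  have hmk := AddCircle.measurePreserving_mk (2 * π) 0
  rw [zero_add] at hmk
  have hexp : Circle.exp = AddCircle.toCircle ∘ ((↑) : ℝ → AddCircle (2 * π)) := by
    ext t
    simp [AddCircle.toCircle_apply_mk]
  rw [circleHaar, hexp, ← Measure.map_map AddCircle.continuous_toCircle.measurable hmk.measurable,
    hmk.map_eq, AddCircle.volume_eq_smul_haarAddCircle, Measure.map_smul, smul_smul,
    ENNReal.inv_mul_cancel (by simp [Real.pi_pos]) ENNReal.ofReal_ne_top, one_smul]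

instance : IsProbabilityMeasure circleHaar := by
  rw [circleHaar_eq_map_haarAddCircle]
  exact Measure.isProbabilityMeasure_map AddCircle.continuous_toCircle.aemeasurable

instance : circleHaar.IsMulLeftInvariant where
  map_mul_left_eq_self u := by
    have hmeas : Measurable (AddCircle.toCircle (T := 2 * π)) :=
      AddCircle.continuous_toCircle.measurable
    obtain ⟨a, ha⟩ : ∃ a : AddCircle (2 * π), AddCircle.toCircle a = u :=
      ⟨(Complex.arg u : ℝ), by rw [AddCircle.toCircle_apply_mk]; simp⟩
    have hcomp : (u * ·) ∘ AddCircle.toCircle = AddCircle.toCircle ∘ (a + ·) := by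
      ext x
      simp [AddCircle.toCircle_add, ha]
    rw [circleHaar_eq_map_haarAddCircle, Measure.map_map (measurable_const_mul u) hmeas, hcomp,
      ← Measure.map_map hmeas (measurable_const_add a), map_add_left_eq_self]

lemma integrable_coe_circleHaar : Integrable (fun w : Circle ↦ (w : ℂ)) circleHaar :=
  .of_bound (by fun_prop) 1 (ae_of_all _ fun w ↦ (Circle.norm_coe w).le)

lemma integral_re_circleHaar : ∫ w : Circle, (w : ℂ).re ∂circleHaar = 0 := by
  rw [integral_circleHaar (by fun_prop)]
  simp [Complex.exp_ofReal_mul_I_re]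

lemma variance_re_circleHaar : Var[fun w : Circle ↦ (w : ℂ).re; circleHaar] = 1 / 2 := by
  rw [variance_of_integral_eq_zero (by fun_prop) integral_re_circleHaar,
    integral_circleHaar (by fun_prop)]
  simp only [Circle.coe_exp, Complex.exp_ofReal_mul_I_re, integral_cos_sq, Real.sin_two_pi,
    Real.sin_zero, smul_eq_mul]
  field_simp
  ring

lemma integral_abs_cos : ∫ t in (0 : ℝ)..2 * π, |Real.cos t| = 4 := by
  have hpi := Real.pi_pos
  have hint (a b : ℝ) : IntervalIntegrable (fun t ↦ |Real.cos t|) volume a b :=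
    Real.continuous_cos.abs.intervalIntegrable a b
  have hperiodic : Function.Periodic (fun t ↦ |Real.cos t|) (2 * π) :=
    fun t ↦ by simp only [Real.cos_add_two_pi]
  have hpos : ∫ t in (-(π / 2))..π / 2, |Real.cos t| = 2 := by
    rw [intervalIntegral.integral_congr (g := Real.cos) fun t ht ↦ ?_, integral_cos]
    · rw [Real.sin_neg, Real.sin_pi_div_two]
      norm_num
    · rw [uIcc_of_le (by linarith)] at ht
      exact abs_of_nonneg (Real.cos_nonneg_of_mem_Icc ht)
  have hneg : ∫ t in (π / 2)..(-(π / 2) + 2 * π), |Real.cos t| = 2 := by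
    rw [intervalIntegral.integral_congr (g := fun t ↦ -Real.cos t) fun t ht ↦ ?_,
      intervalIntegral.integral_neg, integral_cos]
    · rw [Real.sin_add_two_pi, Real.sin_neg, Real.sin_pi_div_two]
      norm_num
    · rw [uIcc_of_le (by linarith)] at ht
      exact abs_of_nonpos
        (Real.cos_nonpos_of_pi_div_two_le_of_le ht.1 (by linarith [ht.2]))
  calc ∫ t in (0 : ℝ)..2 * π, |Real.cos t|
      = ∫ t in (-(π / 2))..(-(π / 2) + 2 * π), |Real.cos t| := by
        simpa only [zero_add] using hperiodic.intervalIntegral_add_eq 0 (-(π / 2))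
    _ = 2 + 2 := by
        rw [← intervalIntegral.integral_add_adjacent_intervals (hint _ (π / 2)) (hint _ _), hpos,
          hneg]
    _ = 4 := by norm_num

lemma integral_abs_re_circleHaar : ∫ w : Circle, |(w : ℂ).re| ∂circleHaar = 2 / π := by
  rw [integral_circleHaar (by fun_prop)]
  simp only [Circle.coe_exp, Complex.exp_ofReal_mul_I_re, integral_abs_cos, smul_eq_mul]
  field_simp
  norm_num

lemma integral_abs_re_mul_circleHaar (s : ℂ) :
    ∫ w : Circle, |((w : ℂ) * s).re| ∂circleHaar = 2 / π * ‖s‖ := by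
  have hpolar (w : Circle) :
      |((w : ℂ) * s).re| = |((w * Circle.exp s.arg : Circle) : ℂ).re| * ‖s‖ := by
    nth_rw 1 [← Complex.norm_mul_exp_arg_mul_I s]
    rw [← Circle.coe_exp, mul_left_comm, ← Circle.coe_mul, Complex.re_ofReal_mul, abs_mul,
      abs_norm, mul_comm]
  simp_rw [hpolar]
  rw [integral_mul_const, integral_mul_right_eq_self (fun w : Circle ↦ |(w : ℂ).re|),
    integral_abs_re_circleHaar]

theorem integral_norm_eq_integral_abs_re {Ω : Type*} {mΩ : MeasurableSpace Ω} {P : Measure Ω}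
    [SFinite P] {X : Ω → ℂ} (hX : Integrable X P)
    (hrot : ∀ u : Circle, IdentDistrib (fun ω ↦ (u : ℂ) * X ω) X P P) :
    ∫ ω, ‖X ω‖ ∂P = π / 2 * ∫ ω, |(X ω).re| ∂P := by
  have hint : Integrable (Function.uncurry fun (ω : Ω) (u : Circle) ↦ |((u : ℂ) * X ω).re|)
      (P.prod circleHaar) := by
    simpa only [mul_comm] using! (hX.mul_prod integrable_coe_circleHaar).re.abs
  have haverage : 2 / π * ∫ ω, ‖X ω‖ ∂P = ∫ ω, |(X ω).re| ∂P :=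
    calc 2 / π * ∫ ω, ‖X ω‖ ∂P
        = ∫ ω, ∫ u : Circle, |((u : ℂ) * X ω).re| ∂circleHaar ∂P := by
          simp only [integral_abs_re_mul_circleHaar, integral_const_mul]
      _ = ∫ u : Circle, ∫ ω, |((u : ℂ) * X ω).re| ∂P ∂circleHaar := integral_integral_swap hint
      _ = ∫ _ : Circle, ∫ ω, |(X ω).re| ∂P ∂circleHaar :=
          integral_congr_ae <| ae_of_all _ fun u ↦
            ((hrot u).comp (u := fun s : ℂ ↦ |s.re|) (by fun_prop)).integral_eq
      _ = ∫ ω, |(X ω).re| ∂P := by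
          rw [integral_const, probReal_univ, one_smul]
  rw [← haverage]
  field_simp

end Rotation

section Torus

lemma identDistrib_circle_mul_sum_torusHaar (d : ℕ) (u : Circle) :
    IdentDistrib (fun z : Fin d → Circle ↦ (u : ℂ) * ∑ j, (z j : ℂ)) (fun z ↦ ∑ j, (z j : ℂ))
      (torusHaar d) (torusHaar d) := by
  have hmp : MeasurePreserving (fun (z : Fin d → Circle) j ↦ u * z j) (torusHaar d)
      (torusHaar d) :=
    measurePreserving_pi _ _ fun _ ↦ measurePreserving_mul_left circleHaar u
  have hid : IdentDistrib (fun (z : Fin d → Circle) j ↦ u * z j) id (torusHaar d) (torusHaar d) :=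
    ⟨hmp.aemeasurable, aemeasurable_id, by rw [hmp.map_eq, Measure.map_id]⟩
  simpa only [Function.comp_def, id, Circle.coe_mul, Finset.mul_sum] using
    hid.comp (u := fun z : Fin d → Circle ↦ ∑ j, (z j : ℂ)) (by fun_prop)

lemma integral_norm_sum_torusHaar (d : ℕ) :
    ∫ z : Fin d → Circle, ‖∑ j, (z j : ℂ)‖ ∂torusHaar d =
      π / 2 * ∫ z : Fin d → Circle, |∑ j, (z j : ℂ).re| ∂torusHaar d := by
  have hint : Integrable (fun z : Fin d → Circle ↦ ∑ j, (z j : ℂ)) (torusHaar d) :=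
    integrable_finsetSum _ fun j _ ↦
      (measurePreserving_eval _ j).integrable_comp_of_integrable integrable_coe_circleHaar
  have : SFinite (torusHaar d) := by
    rw [torusHaar]
    infer_instance
  simpa only [Complex.re_sum] using
    integral_norm_eq_integral_abs_re hint (identDistrib_circle_mul_sum_torusHaar d)

theorem tendsto_integral_norm_sum_div_sqrt_torusHaar :
    Tendsto (fun d : ℕ ↦ ∫ z : Fin d → Circle, ‖∑ j, (z j : ℂ)‖ / √d ∂torusHaar d) atTop
      (𝓝 (√π / 2)) := by
  have hre : MemLp (fun w : Circle ↦ (w : ℂ).re) 2 circleHaar :=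
    .of_bound (by fun_prop) 1 (ae_of_all _ fun w ↦
      (Complex.abs_re_le_norm _).trans_eq (Circle.norm_coe w))
  have hlim := (tendsto_integral_pi_abs_inv_sqrt_mul_sum_sub hre).const_mul (π / 2)
  have hconst : π / 2 * √(2 * (1 / 2) / π) = √π / 2 := by
    rw [mul_one_div_cancel two_ne_zero, Real.sqrt_div zero_le_one, Real.sqrt_one]
    field_simp
    rw [Real.sq_sqrt Real.pi_pos.le]
  rw [variance_re_circleHaar, integral_re_circleHaar, hconst] at hlim
  refine hlim.congr fun d ↦ ?_
  rw [integral_div, integral_norm_sum_torusHaar, mul_div_assoc, ← integral_div, torusHaar]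
  simp only [mul_zero, sub_zero, inv_mul_eq_div, abs_div, abs_of_nonneg (Real.sqrt_nonneg _)]

end Torus

lemma two_rpow_one_div_mul_sqrt_pi_div_two_lt_one {p : ℝ}
    (hp : (1 - Real.log π / Real.log 4)⁻¹ < p) : (2 : ℝ) ^ (1 / p) * (√π / 2) < 1 := by
  have hlog4 : Real.log 4 = 2 * Real.log 2 := by
    rw [show (4 : ℝ) = 2 ^ 2 by norm_num, Real.log_pow, Nat.cast_two]
  have hgap : 0 < 1 - Real.log π / Real.log 4 := by
    rw [sub_pos, div_lt_one (by positivity)]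
    exact Real.log_lt_log Real.pi_pos Real.pi_lt_four
  have hinv : 1 / p < 1 - Real.log π / (2 * Real.log 2) := by
    rw [one_div, ← hlog4]
    exact inv_lt_of_inv_lt₀ hgap hp
  have hmul : 1 / p * Real.log 2 < Real.log 2 - Real.log π / 2 :=
    calc 1 / p * Real.log 2 < (1 - Real.log π / (2 * Real.log 2)) * Real.log 2 := by gcongr
      _ = Real.log 2 - Real.log π / 2 := by field_simp
  rw [← Real.log_neg_iff (by positivity), Real.log_mul (by positivity) (by positivity),
    Real.log_rpow two_pos, Real.log_div (by positivity) two_ne_zero, Real.log_sqrt Real.pi_pos.le]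
  linarith

/-- Quantitative core of the main theorem: if `p > p₀ = (1 - log π / log 4)⁻¹`, then
there is a dimension `d` with `2^{1/p} ∫_{𝕋^d} |z₁ + ⋯ + z_d|/√d dm < 1`. -/
theorem exists_dim_main (p : ℝ) (hp : (1 - Real.log Real.pi / Real.log 4)⁻¹ < p) :
    ∃ d : ℕ, 0 < d ∧
      (2 : ℝ) ^ (1 / p) *
        ∫ z : Fin d → Circle, ‖∑ j, (z j : ℂ)‖ / Real.sqrt d ∂(torusHaar d) < 1 := by
  have hlim := tendsto_integral_norm_sum_div_sqrt_torusHaar.const_mul ((2 : ℝ) ^ (1 / p))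
  have hlt := hlim.eventually_lt_const (two_rpow_one_div_mul_sqrt_pi_div_two_lt_one hp)
  exact ((eventually_gt_atTop 0).and hlt).exists
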